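/- arXiv:0806.2525 — 2 statements merged into one kernel-verified Lean document; each statement's English description precedes it below -/
import Mathlib

section
/- Let R f(ω) := Σ_{z∈Λ} f(T_z ω) p_z(ω) and R* f(ω) := Σ_{z∈Λ*} f(T_z ω) p_z*(ω), where Λ* := −Λ and p_z*(ω) := M(ω)^{−1} Σ_{i=1}^K Σ_{x∈ℤ^d} W_i(T_x ω)·1{(0,z) ∈ C_i* + x} with C_i* the reversal of C_i. Then for all measurable f,g : Ω → [0,∞], ∫ (R*f)·g dℚ = ∫ f·(Rg) dℚ; in particular, ℚ is an invariant measure for both R and R*: ∫ Rf dℚ = ∫ f dℚ = ∫ R*f dℚ. -/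
open scoped Classical

noncomputable section

/-- Points of `ℤ^d`. -/
abbrev Zd (d : ℕ) := Fin d → ℤ

/-- Euclidean norm on `ℤ^d`. -/
def eucNorm {d : ℕ} (v : Zd d) : ℝ := Real.sqrt (∑ i, ((v i : ℝ)) ^ 2)

/-- `M(ω) = Σ_i Σ_x W_i(T_x ω) · 1{0 ∈ C_i + x}`, where the `i`-th cycle is
`C_i = (z i 0, …, z i (n i))`. -/
def Mfun {d K : ℕ} {Ω : Type*} (n : Fin K → ℕ) (z : Fin K → ℕ → Zd d)
    (T : Zd d → Ω → Ω) (W : Fin K → Ω → ℝ) (ω : Ω) : ℝ :=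
  ∑ i : Fin K, ∑' x : Zd d, if ∃ j < n i, z i j + x = 0 then W i (T x ω) else 0

/-- `p_v(ω) = M(ω)⁻¹ Σ_i Σ_x W_i(T_x ω) · 1{(0,v) ∈ C_i + x}`. -/
def pfun {d K : ℕ} {Ω : Type*} (n : Fin K → ℕ) (z : Fin K → ℕ → Zd d)
    (T : Zd d → Ω → Ω) (W : Fin K → Ω → ℝ) (ω : Ω) (v : Zd d) : ℝ :=
  (Mfun n z T W ω)⁻¹ *
    ∑ i : Fin K, ∑' x : Zd d,
      if ∃ j, 1 ≤ j ∧ j ≤ n i ∧ z i (j - 1) + x = 0 ∧ z i j + x = v then W i (T x ω) else 0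

/-- `Λ`, the (finite) set of possible jumps. -/
def Lam {d K : ℕ} (n : Fin K → ℕ) (z : Fin K → ℕ → Zd d) : Finset (Zd d) :=
  Finset.univ.biUnion fun i => (Finset.range (n i)).image fun j => z i (j + 1) - z i j

/-- The quenched transition kernel `Q_ω(x,y) = p_{y-x}(T_x ω)`. -/
def Qker {d K : ℕ} {Ω : Type*} (n : Fin K → ℕ) (z : Fin K → ℕ → Zd d)
    (T : Zd d → Ω → Ω) (W : Fin K → Ω → ℝ) (ω : Ω) (x y : Zd d) : ℝ :=
  pfun n z T W (T x ω) (y - x)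

/-- `n`-fold composition of a transition kernel. -/
def kerpow {d : ℕ} (Q : Zd d → Zd d → ℝ) : ℕ → Zd d → Zd d → ℝ
  | 0 => fun x y => if x = y then 1 else 0
  | m + 1 => fun x y => ∑' zz : Zd d, kerpow Q m x zz * Q zz y

open MeasureTheory
open scoped ENNReal

/-- The invariant measure `ℚ` for the environment chain: density `M/Z` w.r.t. `ℙ`. -/
def Qmeas {d K : ℕ} {Ω : Type*} [MeasurableSpace Ω] (μ : Measure Ω)
    (n : Fin K → ℕ) (z : Fin K → ℕ → Zd d)
    (T : Zd d → Ω → Ω) (W : Fin K → Ω → ℝ) : Measure Ω :=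
  μ.withDensity fun ω => ENNReal.ofReal (Mfun n z T W ω / ∫ ω', Mfun n z T W ω' ∂μ)

/-- The transition operator `R` of the environment chain. -/
def Rop {d K : ℕ} {Ω : Type*} (n : Fin K → ℕ) (z : Fin K → ℕ → Zd d)
    (T : Zd d → Ω → Ω) (W : Fin K → Ω → ℝ) (f : Ω → ℝ) (ω : Ω) : ℝ :=
  ∑ v ∈ Lam n z, f (T v ω) * pfun n z T W ω v

/-- `p*_v(ω)`, the jump probabilities of the reversed cycles `C_i*`
(points `j ↦ z i (n i - j)`). -/
def pstarfun {d K : ℕ} {Ω : Type*} (n : Fin K → ℕ) (z : Fin K → ℕ → Zd d)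
    (T : Zd d → Ω → Ω) (W : Fin K → Ω → ℝ) (ω : Ω) (v : Zd d) : ℝ :=
  (Mfun n z T W ω)⁻¹ *
    ∑ i : Fin K, ∑' x : Zd d,
      if ∃ j, 1 ≤ j ∧ j ≤ n i ∧ z i (n i - (j - 1)) + x = 0 ∧ z i (n i - j) + x = v then
        W i (T x ω) else 0

/-- The operator `R` acting on `[0,∞]`-valued functions. -/
def RopE {d K : ℕ} {Ω : Type*} (n : Fin K → ℕ) (z : Fin K → ℕ → Zd d)
    (T : Zd d → Ω → Ω) (W : Fin K → Ω → ℝ) (f : Ω → ℝ≥0∞) (ω : Ω) : ℝ≥0∞ :=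
  ∑ v ∈ Lam n z, f (T v ω) * ENNReal.ofReal (pfun n z T W ω v)

/-- The operator `R*` acting on `[0,∞]`-valued functions; the sum runs over `Λ* = -Λ`. -/
def RstarE {d K : ℕ} {Ω : Type*} (n : Fin K → ℕ) (z : Fin K → ℕ → Zd d)
    (T : Zd d → Ω → Ω) (W : Fin K → Ω → ℝ) (f : Ω → ℝ≥0∞) (ω : Ω) : ℝ≥0∞ :=
  ∑ v ∈ (Lam n z).image (fun w => -w), f (T v ω) * ENNReal.ofReal (pstarfun n z T W ω v)

/-- A sum over translations `x` selected by an injective family of points is a finite sum. -/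
lemma tsum_ite_exists_add_eq_zero {G E : Type*} [AddGroup G] [AddCommMonoid E]
    [TopologicalSpace E] (m : ℕ) (a : ℕ → G) (P : ℕ → G → Prop) (h : G → E)
    (ha : ∀ j k, j < m → k < m → a j = a k → j = k) :
    (∑' x : G, if ∃ j < m, a j + x = 0 ∧ P j x then h x else 0)
      = ∑ j ∈ Finset.range m, if P j (-a j) then h (-a j) else 0 := by
  have hinj : Set.InjOn (fun j => -a j) (Finset.range m : Set ℕ) := fun j hj k hk hjk =>
    ha j k (by simpa using hj) (by simpa using hk) (neg_injective hjk)
  rw [tsum_eq_sum (s := (Finset.range m).image fun j => -a j), Finset.sum_image hinj]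
  · refine Finset.sum_congr rfl fun j hj => ?_
    have hiff : (∃ k < m, a k + -a j = 0 ∧ P k (-a j)) ↔ P j (-a j) := by
      constructor
      · rintro ⟨k, hk, hkj, hP⟩
        obtain rfl := ha k j hk (Finset.mem_range.1 hj) (add_neg_eq_zero.1 hkj)
        exact hP
      · exact fun hP => ⟨j, Finset.mem_range.1 hj, add_neg_cancel _, hP⟩
    simp only [hiff]
  · intro x hx
    refine if_neg ?_
    rintro ⟨j, hj, hjx, -⟩
    exact hx (Finset.mem_image.2 ⟨j, Finset.mem_range.2 hj, neg_eq_of_add_eq_zero_right hjx⟩)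

/-- Points shifted by one along a cycle are still pairwise distinct. -/
lemma cycle_succ_injective {G : Type*} {m : ℕ} {a : ℕ → G} (hcyc : a m = a 0)
    (ha : ∀ j k, j < m → k < m → a j = a k → j = k) :
    ∀ j k, j < m → k < m → a (j + 1) = a (k + 1) → j = k := by
  intro j k hj hk hjk
  rcases Nat.lt_or_ge (j + 1) m with hj' | hj' <;> rcases Nat.lt_or_ge (k + 1) m with hk' | hk'
  · have := ha _ _ hj' hk' hjk
    omega
  · obtain rfl : k + 1 = m := by omega
    have := ha _ _ hj' (by omega) (hjk.trans hcyc)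
    omega
  · obtain rfl : j + 1 = m := by omega
    have := ha _ _ hk' (by omega) (hjk.symm.trans hcyc)
    omega
  · omega

lemma Mfun_eq_sum {d K : ℕ} {Ω : Type*} {n : Fin K → ℕ} {z : Fin K → ℕ → Zd d}
    (T : Zd d → Ω → Ω) (W : Fin K → Ω → ℝ)
    (hinj : ∀ i, ∀ j k, j < n i → k < n i → z i j = z i k → j = k) (ω : Ω) :
    Mfun n z T W ω = ∑ i, ∑ j ∈ Finset.range (n i), W i (T (-z i j) ω) := by
  refine Finset.sum_congr rfl fun i _ => ?_
  simpa using tsum_ite_exists_add_eq_zero (n i) (z i) (fun _ _ => True)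
    (fun x => W i (T x ω)) (hinj i)

/-- Summing over jumps `v` against the edge weights `(0, v) ∈ C + x`, where the edges of the
cycles are `(a i j, b i j)`, amounts to summing over the edges. -/
lemma ofReal_mul_sum_jump_eq_sum_edge {d K : ℕ} {Ω : Type*} {n : Fin K → ℕ}
    {a b : Fin K → ℕ → Zd d} {T : Zd d → Ω → Ω} {W : Fin K → Ω → ℝ}
    (ha : ∀ i, ∀ j k, j < n i → k < n i → a i j = a i k → j = k)
    (hW : ∀ i ω, 0 ≤ W i ω) {L : Finset (Zd d)}
    (hL : ∀ i, ∀ j < n i, b i j - a i j ∈ L) {m : ℝ} (hm : 0 < m)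
    (g : Ω → ℝ≥0∞) (ω : Ω) :
    ENNReal.ofReal m * ∑ v ∈ L, g (T v ω) * ENNReal.ofReal (m⁻¹ * ∑ i, ∑' x : Zd d,
        if ∃ j < n i, a i j + x = 0 ∧ b i j + x = v then W i (T x ω) else 0)
      = ∑ i, ∑ j ∈ Finset.range (n i),
          g (T (b i j - a i j) ω) * ENNReal.ofReal (W i (T (-a i j) ω)) := by
  have key : ∀ v, ENNReal.ofReal m * (g (T v ω) * ENNReal.ofReal (m⁻¹ * ∑ i, ∑' x : Zd d,
        if ∃ j < n i, a i j + x = 0 ∧ b i j + x = v then W i (T x ω) else 0))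
      = ∑ i, ∑ j ∈ Finset.range (n i), if b i j - a i j = v then
          g (T v ω) * ENNReal.ofReal (W i (T (-a i j) ω)) else 0 := by
    intro v
    have hsum : ∀ i, (∑' x : Zd d,
        if ∃ j < n i, a i j + x = 0 ∧ b i j + x = v then W i (T x ω) else 0)
        = ∑ j ∈ Finset.range (n i), if b i j - a i j = v then W i (T (-a i j) ω) else 0 := by
      intro i
      simp only [sub_eq_add_neg]
      convert tsum_ite_exists_add_eq_zero (n i) (a i)
        (fun j x => b i j + x = v) (fun x => W i (T x ω)) (ha i)
    have hnn : ∀ i j, 0 ≤ if b i j - a i j = v then W i (T (-a i j) ω) else 0 := by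
      intro i j
      split_ifs
      exacts [hW _ _, le_rfl]
    rw [mul_left_comm, ← ENNReal.ofReal_mul hm.le, mul_inv_cancel_left₀ hm.ne']
    simp only [hsum]
    rw [ENNReal.ofReal_sum_of_nonneg fun i _ => Finset.sum_nonneg fun j _ => hnn i j,
      Finset.mul_sum]
    refine Finset.sum_congr rfl fun i _ => ?_
    rw [ENNReal.ofReal_sum_of_nonneg fun j _ => hnn i j, Finset.mul_sum]
    refine Finset.sum_congr rfl fun j _ => ?_
    split_ifs <;> simp
  rw [Finset.mul_sum]
  simp only [key]
  rw [Finset.sum_comm]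
  refine Finset.sum_congr rfl fun i _ => ?_
  rw [Finset.sum_comm]
  refine Finset.sum_congr rfl fun j hj => ?_
  rw [Finset.sum_ite_eq, if_pos (hL i j (Finset.mem_range.1 hj))]

lemma sub_mem_Lam {d K : ℕ} (n : Fin K → ℕ) (z : Fin K → ℕ → Zd d) (i : Fin K) {j : ℕ}
    (hj : j < n i) : z i (j + 1) - z i j ∈ Lam n z :=
  Finset.mem_biUnion.2 ⟨i, Finset.mem_univ i, Finset.mem_image.2 ⟨j, Finset.mem_range.2 hj, rfl⟩⟩

lemma ofReal_Mfun_mul_RopE {d K : ℕ} {Ω : Type*} {n : Fin K → ℕ} {z : Fin K → ℕ → Zd d}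
    {T : Zd d → Ω → Ω} {W : Fin K → Ω → ℝ}
    (hinj : ∀ i, ∀ j k, j < n i → k < n i → z i j = z i k → j = k)
    (hW : ∀ i ω, 0 ≤ W i ω) (g : Ω → ℝ≥0∞) {ω : Ω} (hM : 0 < Mfun n z T W ω) :
    ENNReal.ofReal (Mfun n z T W ω) * RopE n z T W g ω
      = ∑ i, ∑ j ∈ Finset.range (n i),
          g (T (z i (j + 1) - z i j) ω) * ENNReal.ofReal (W i (T (-z i j) ω)) := by
  rw [← ofReal_mul_sum_jump_eq_sum_edge (b := fun i j => z i (j + 1)) hinj hW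
    (fun i _ hj => sub_mem_Lam n z i hj) hM]
  have hiff : ∀ i (x v : Zd d),
      (∃ j, 1 ≤ j ∧ j ≤ n i ∧ z i (j - 1) + x = 0 ∧ z i j + x = v)
        ↔ ∃ j < n i, z i j + x = 0 ∧ z i (j + 1) + x = v := by
    intro i x v
    constructor
    · rintro ⟨j, hj1, hjn, h0, hv⟩
      exact ⟨j - 1, by omega, h0, by rwa [Nat.sub_add_cancel hj1]⟩
    · rintro ⟨j, hj, h0, hv⟩
      exact ⟨j + 1, by omega, hj, h0, hv⟩
  simp only [RopE, pfun, hiff]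

lemma ofReal_Mfun_mul_RstarE {d K : ℕ} {Ω : Type*} {n : Fin K → ℕ} {z : Fin K → ℕ → Zd d}
    {T : Zd d → Ω → Ω} {W : Fin K → Ω → ℝ} (hcyc : ∀ i, z i (n i) = z i 0)
    (hinj : ∀ i, ∀ j k, j < n i → k < n i → z i j = z i k → j = k)
    (hW : ∀ i ω, 0 ≤ W i ω) (f : Ω → ℝ≥0∞) {ω : Ω} (hM : 0 < Mfun n z T W ω) :
    ENNReal.ofReal (Mfun n z T W ω) * RstarE n z T W f ω
      = ∑ i, ∑ j ∈ Finset.range (n i),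
          f (T (z i j - z i (j + 1)) ω) * ENNReal.ofReal (W i (T (-z i (j + 1)) ω)) := by
  rw [← ofReal_mul_sum_jump_eq_sum_edge (a := fun i j => z i (j + 1))
    (L := (Lam n z).image fun w => -w)
    (fun i => cycle_succ_injective (hcyc i) (hinj i)) hW
    (fun i j hj => Finset.mem_image.2 ⟨_, sub_mem_Lam n z i hj, neg_sub _ _⟩) hM]
  have hiff : ∀ i (x v : Zd d),
      (∃ j, 1 ≤ j ∧ j ≤ n i ∧ z i (n i - (j - 1)) + x = 0 ∧ z i (n i - j) + x = v)
        ↔ ∃ j < n i, z i (j + 1) + x = 0 ∧ z i j + x = v := by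
    intro i x v
    constructor
    · rintro ⟨j, hj1, hjn, h0, hv⟩
      refine ⟨n i - j, by omega, ?_, hv⟩
      rwa [show n i - j + 1 = n i - (j - 1) by omega]
    · rintro ⟨j, hj, h0, hv⟩
      refine ⟨n i - j, by omega, by omega, ?_, ?_⟩
      · rwa [show n i - (n i - j - 1) = j + 1 by omega]
      · rwa [show n i - (n i - j) = j by omega]
  simp only [RstarE, pstarfun, hiff]

/-- Integration against `ℚ` is integration against `M` times `ℙ`, up to a constant. -/
lemma lintegral_Qmeas {d K : ℕ} {Ω : Type*} [MeasurableSpace Ω] (μ : Measure Ω)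
    {n : Fin K → ℕ} {z : Fin K → ℕ → Zd d} {T : Zd d → Ω → Ω} {W : Fin K → Ω → ℝ}
    (hMmeas : Measurable (Mfun n z T W)) (hM : ∀ ω, 0 < Mfun n z T W ω) (f : Ω → ℝ≥0∞) :
    ∫⁻ ω, f ω ∂(Qmeas μ n z T W)
      = ENNReal.ofReal (∫ ω, Mfun n z T W ω ∂μ)⁻¹
          * ∫⁻ ω, ENNReal.ofReal (Mfun n z T W ω) * f ω ∂μ := by
  rw [Qmeas, lintegral_withDensity_eq_lintegral_mul_non_measurable _
    (hMmeas.div_const _).ennreal_ofReal (by simp),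
    ← lintegral_const_mul' _ _ ENNReal.ofReal_ne_top]
  refine lintegral_congr fun ω => ?_
  rw [Pi.mul_apply, div_eq_mul_inv, ENNReal.ofReal_mul (hM ω).le]
  ring

theorem Rstar_adjoint_of_R_and_Q_invariant
    (d K : ℕ) (hd : 0 < d) (hK : 0 < K) (Ω : Type*) [MeasurableSpace Ω]
    (μ : Measure Ω) [IsProbabilityMeasure μ]
    (n : Fin K → ℕ) (z : Fin K → ℕ → Zd d)
    (T : Zd d → Ω → Ω) (W : Fin K → Ω → ℝ) (c C : ℝ)
    (hlen : ∀ i, 0 < n i)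
    (hcyc : ∀ i, z i (n i) = z i 0)
    (hinj : ∀ i, ∀ j k, j < n i → k < n i → z i j = z i k → j = k)
    (hT : ∀ x y : Zd d, T (x + y) = T x ∘ T y) (hT0 : T 0 = id)
    (hTpres : ∀ x : Zd d, MeasurePreserving (T x) μ μ)
    (hW : ∀ i ω, 0 ≤ W i ω) (hWmeas : ∀ i, Measurable (W i))
    (hc : 0 < c) (hCfin : c ≤ C)
    (hM : ∀ ω, c ≤ Mfun n z T W ω ∧ Mfun n z T W ω ≤ C) :
    (∀ f g : Ω → ℝ≥0∞, Measurable f → Measurable g →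
      ∫⁻ ω, RstarE n z T W f ω * g ω ∂(Qmeas μ n z T W)
        = ∫⁻ ω, f ω * RopE n z T W g ω ∂(Qmeas μ n z T W)) ∧
    (∀ f : Ω → ℝ≥0∞, Measurable f →
      (∫⁻ ω, RopE n z T W f ω ∂(Qmeas μ n z T W) = ∫⁻ ω, f ω ∂(Qmeas μ n z T W)) ∧
      (∫⁻ ω, RstarE n z T W f ω ∂(Qmeas μ n z T W) = ∫⁻ ω, f ω ∂(Qmeas μ n z T W))) := by
  have hMpos : ∀ ω, 0 < Mfun n z T W ω := fun ω => hc.trans_le (hM ω).1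
  have hMeq := Mfun_eq_sum T W hinj
  have hTm : ∀ x, Measurable (T x) := fun x => (hTpres x).measurable
  have hMmeas : Measurable (Mfun n z T W) := by
    rw [funext hMeq]
    exact Finset.measurable_fun_sum _ fun i _ => Finset.measurable_fun_sum _ fun j _ =>
      (hWmeas i).comp (hTm _)
  have hMofReal : ∀ ω, ENNReal.ofReal (Mfun n z T W ω)
      = ∑ i, ∑ j ∈ Finset.range (n i), ENNReal.ofReal (W i (T (-z i j) ω)) := by
    intro ω
    rw [hMeq, ENNReal.ofReal_sum_of_nonneg fun i _ => Finset.sum_nonneg fun j _ => hW i _]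
    exact Finset.sum_congr rfl fun i _ => ENNReal.ofReal_sum_of_nonneg fun j _ => hW i _
  have hcancel : ∀ ω (r : ℝ≥0∞), ENNReal.ofReal (Mfun n z T W ω) * r
      = ENNReal.ofReal (Mfun n z T W ω) → r = 1 := by
    intro ω r h
    refine (ENNReal.mul_right_inj (ENNReal.ofReal_pos.2 (hMpos ω)).ne'
      ENNReal.ofReal_ne_top).1 (h.trans (mul_one _).symm)
  have hR1 : ∀ ω, RopE n z T W (fun _ => 1) ω = 1 := fun ω => hcancel ω _ <| by
    rw [ofReal_Mfun_mul_RopE hinj hW _ (hMpos ω), hMofReal]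
    simp only [one_mul]
  have hRstar1 : ∀ ω, RstarE n z T W (fun _ => 1) ω = 1 := fun ω => hcancel ω _ <| by
    rw [ofReal_Mfun_mul_RstarE hcyc hinj hW _ (hMpos ω), hMofReal]
    refine Finset.sum_congr rfl fun i _ => ?_
    simp only [one_mul]
    obtain ⟨m, hm⟩ := Nat.exists_eq_succ_of_ne_zero (hlen i).ne'
    have hm0 := hcyc i
    rw [hm] at hm0 ⊢
    rw [Finset.sum_range_succ, Finset.sum_range_succ' _ m, hm0]
  have hadj : ∀ f g : Ω → ℝ≥0∞, Measurable f → Measurable g →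
      ∫⁻ ω, RstarE n z T W f ω * g ω ∂(Qmeas μ n z T W)
        = ∫⁻ ω, f ω * RopE n z T W g ω ∂(Qmeas μ n z T W) := by
    intro f g hf hg
    rw [lintegral_Qmeas μ hMmeas hMpos, lintegral_Qmeas μ hMmeas hMpos]
    congr 1
    have hWm : ∀ i x, Measurable fun ω => ENNReal.ofReal (W i (T x ω)) := fun i x =>
      ((hWmeas i).comp (hTm x)).ennreal_ofReal
    simp only [← mul_assoc, ofReal_Mfun_mul_RstarE hcyc hinj hW f (hMpos _)]
    simp only [mul_right_comm _ (f _), ofReal_Mfun_mul_RopE hinj hW g (hMpos _), Finset.sum_mul]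
    have hmeas₁ : ∀ i j, Measurable fun ω => f (T (z i j - z i (j + 1)) ω)
        * ENNReal.ofReal (W i (T (-z i (j + 1)) ω)) * g ω := fun i j =>
      ((hf.comp (hTm _)).mul (hWm _ _)).mul hg
    have hmeas₂ : ∀ i j, Measurable fun ω => g (T (z i (j + 1) - z i j) ω)
        * ENNReal.ofReal (W i (T (-z i j) ω)) * f ω := fun i j =>
      ((hg.comp (hTm _)).mul (hWm _ _)).mul hf
    rw [lintegral_finsetSum _ fun i _ => Finset.measurable_fun_sum _ fun j _ => hmeas₁ i j,
      lintegral_finsetSum _ fun i _ => Finset.measurable_fun_sum _ fun j _ => hmeas₂ i j]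
    refine Finset.sum_congr rfl fun i _ => ?_
    rw [lintegral_finsetSum _ fun j _ => hmeas₁ i j, lintegral_finsetSum _ fun j _ => hmeas₂ i j]
    refine Finset.sum_congr rfl fun j _ => ?_
    rw [← (hTpres (z i (j + 1) - z i j)).lintegral_comp (hmeas₁ i j)]
    refine lintegral_congr fun ω => ?_
    have hcomp : ∀ x y, T x (T y ω) = T (x + y) ω := fun x y => by rw [hT]; rfl
    rw [hcomp, hcomp, show z i j - z i (j + 1) + (z i (j + 1) - z i j) = 0 by abel,
      show -z i (j + 1) + (z i (j + 1) - z i j) = -z i j by abel, hT0, id]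
    ring
  refine ⟨hadj, fun f hf => ⟨?_, ?_⟩⟩
  · simpa only [hRstar1, one_mul] using (hadj (fun _ => 1) f measurable_const hf).symm
  · simpa only [hR1, mul_one] using hadj f (fun _ => 1) hf measurable_const

end
end

section
/- (Induction lemma from the proof of Proposition 2.2) Let d ≥ 1, κ > 0 and C₀ > 0 be such that 1 − κ C₀^{2/d}/(n+1) ≤ (n/(n+1))^{d/2} for every integer n ≥ 1. Let (u_n)_{n ≥ 1} be a sequence of non-negative reals with u_1 ≤ C₀ and u_{n+1} ≤ u_n (1 − κ u_n^{2/d}) for every n ≥ 1. Then u_n ≤ C₀ / n^{d/2} for every n ≥ 1. -/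
theorem induction_lemma_nash_decay
    (d : ℕ) (hd : 1 ≤ d) (κ C₀ : ℝ) (hκ : 0 < κ) (hC₀ : 0 < C₀)
    (hcond : ∀ n : ℕ, 1 ≤ n →
      1 - κ * C₀ ^ ((2 : ℝ) / (d : ℝ)) / ((n : ℝ) + 1) ≤ ((n : ℝ) / ((n : ℝ) + 1)) ^ ((d : ℝ) / 2))
    (u : ℕ → ℝ) (hu : ∀ n : ℕ, 1 ≤ n → 0 ≤ u n) (hu1 : u 1 ≤ C₀)
    (hrec : ∀ n : ℕ, 1 ≤ n → u (n + 1) ≤ u n * (1 - κ * u n ^ ((2 : ℝ) / (d : ℝ)))) :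
    ∀ n : ℕ, 1 ≤ n → u n ≤ C₀ / (n : ℝ) ^ ((d : ℝ) / 2) := by
  intro n hn
  induction n, hn using Nat.le_induction with
  | base => simpa using hu1
  | succ n hn ih =>
    have hd0 : (0 : ℝ) < d := by exact_mod_cast hd
    have hn0 : (0 : ℝ) < n := by exact_mod_cast hn
    have hn1 : (0 : ℝ) < (n : ℝ) + 1 := by positivity
    have hun := hu n hn
    push_cast
    rcases le_total (u n) (C₀ / ((n : ℝ) + 1) ^ ((d : ℝ) / 2)) with h | h
    · have hnonneg : 0 ≤ u n * (κ * u n ^ ((2 : ℝ) / (d : ℝ))) := by positivity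
      linarith [hrec n hn]
    · have hpow : C₀ ^ ((2 : ℝ) / d) / ((n : ℝ) + 1) ≤ u n ^ ((2 : ℝ) / d) := by
        have hmono := Real.rpow_le_rpow (by positivity) h (by positivity : (0 : ℝ) ≤ 2 / d)
        rwa [Real.div_rpow hC₀.le (by positivity), ← Real.rpow_mul hn1.le,
          show (d : ℝ) / 2 * (2 / d) = 1 by field_simp, Real.rpow_one] at hmono
      calc u (n + 1) ≤ u n * (1 - κ * u n ^ ((2 : ℝ) / (d : ℝ))) := hrec n hn
        _ ≤ u n * (1 - κ * C₀ ^ ((2 : ℝ) / (d : ℝ)) / ((n : ℝ) + 1)) := by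
          rw [mul_div_assoc]
          gcongr
        _ ≤ u n * ((n : ℝ) / ((n : ℝ) + 1)) ^ ((d : ℝ) / 2) := by
          gcongr
          exact hcond n hn
        _ ≤ C₀ / (n : ℝ) ^ ((d : ℝ) / 2) * ((n : ℝ) / ((n : ℝ) + 1)) ^ ((d : ℝ) / 2) := by
          gcongr
        _ = C₀ / ((n : ℝ) + 1) ^ ((d : ℝ) / 2) := by
          rw [Real.div_rpow hn0.le hn1.le]
          exact div_mul_div_cancel₀ (by positivity)
end
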